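/- With high probability the following holds: for every perfect matching M of G and every pair of distinct colors i, j ∈ [q] such that |M ∩ Q_i| > βn and |M ∩ Q_j| ≥ βn, there exists a perfect matching M' of G with |M' ∩ Q_i| = |M ∩ Q_i| − 1, |M' ∩ Q_j| = |M ∩ Q_j| + 1, and |M' ∩ Q_l| = |M ∩ Q_l| for every l ∈ [q] \ {i, j}. -/

import Mathlib

open MeasureTheory Filter Finset Asymptotics

/-- Discrete measurable structure on edge states: `none` = non-edge, `some i` = edge of color `cᵢ`. -/
instance (q : ℕ) : MeasurableSpace (Option (Fin q)) := ⊤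

/-- Distribution of the state of a single pair: non-edge with probability `1-p`,
an edge of color `cᵢ` with probability `αᵢ·p`. -/
noncomputable def colorM (q : ℕ) (α : Fin q → ℝ) (p : ℝ) : Measure (Option (Fin q)) :=
  ENNReal.ofReal (1 - p) • Measure.dirac none +
    ∑ i : Fin q, ENNReal.ofReal (α i * p) • Measure.dirac (some i)

/-- The randomly colored random bipartite graph on parts `A = B = Fin n`:
independently, each pair `(a,b)` is a non-edge with probability `1-p` and an
edge of color `cᵢ` with probability `αᵢ·p`.  A sample is a function
`f : Fin n × Fin n → Option (Fin q)`. -/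
noncomputable def graphM (n q : ℕ) (α : Fin q → ℝ) (p : ℝ) :
    Measure (Fin n × Fin n → Option (Fin q)) :=
  Measure.pi fun _ => colorM q α p

/-!
Let `M = {(a, σ a)}` be a perfect matching with at least `βn` edges of color `cᵢ`, and let `V` be
the set of left endpoints of these edges. A permutation `τ` of `V` turns `M` into the matching that
pairs `a ∈ V` with `σ (τ a)`. The exchange is achieved when exactly one of the new edges has color
`c_j` and all the others have color `cᵢ`. Call `a → b` an arc of color `c` if `(a, σ b)` is an edge
of color `c`; then `τ` can be taken to be a cycle consisting of an arc `x → y` of color `c_j` and a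
path from `y` to `x` of arcs of color `cᵢ`.

With high probability any `εn` vertices on the left and any `εn` vertices on the right are joined
by edges of every color: there are at most `4ⁿ` pairs of sets, and each fails for the color `c` with
probability at most `exp (-α_c p (εn)²)`, whose exponent dominates `n` because `np → ∞`. Hence the
digraph of the arcs of color `cᵢ` is strongly connected up to fewer than `2εn` vertices, and some
arc of color `c_j` has both ends in the strongly connected part.
-/

section Digraph

variable {V A B A' B' : Type*} {k : ℕ} {r s : V → V → Prop} {U W : Finset V} {x y : V}

/-- A bipartite relation is `k`-joined if it relates some element of `X` to some element of `Y`
whenever `X` and `Y` have at least `k` elements, i.e. if it has no `k × k` bipartite hole. It serves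
for digraphs too, as the case `A = B`; there `X` and `Y` are allowed to overlap. -/
def IsJoined (k : ℕ) (r : A → B → Prop) : Prop :=
  ∀ (X : Finset A) (Y : Finset B), k ≤ #X → k ≤ #Y → ∃ a ∈ X, ∃ b ∈ Y, r a b

lemma IsJoined.pos {r : A → B → Prop} (hr : IsJoined k r) : 0 < k := by
  by_contra! hk
  obtain ⟨a, ha, -⟩ := hr ∅ ∅ (by simpa using hk) (by simpa using hk)
  exact notMem_empty a ha

lemma IsJoined.comap {r : A → B → Prop} (hr : IsJoined k r) (g : A' ↪ A) (h : B' ↪ B) :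
    IsJoined k fun a b => r (g a) (h b) := by
  intro X Y hX hY
  simpa using hr (X.map g) (Y.map h) (by simpa using hX) (by simpa using hY)

/-- A vertex set is out-closed if no arc leaves it. Out-closed sets cut a digraph into its strongly
connected components. -/
def IsOutClosed (r : V → V → Prop) (U : Finset V) : Prop :=
  ∀ a ∈ U, ∀ b, r a b → b ∈ U

lemma IsOutClosed.union [DecidableEq V] (hU : IsOutClosed r U) (hW : IsOutClosed r W) :
    IsOutClosed r (U ∪ W) := by
  intro a ha b hab
  rcases mem_union.1 ha with ha | ha
  · exact mem_union_left _ (hU a ha b hab)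
  · exact mem_union_right _ (hW a ha b hab)

lemma IsOutClosed.mem_of_reflTransGen (hU : IsOutClosed r U) (hx : x ∈ U)
    (hxy : Relation.ReflTransGen r x y) : y ∈ U := by
  induction hxy with
  | refl => exact hx
  | tail _ hbc hb => exact hU _ hb _ hbc

open scoped Classical in
lemma isOutClosed_filter_reflTransGen [Fintype V] (r : V → V → Prop) (x : V) :
    IsOutClosed r {y | Relation.ReflTransGen r x y} := by
  intro a ha b hab
  simp only [mem_filter_univ] at ha ⊢
  exact ha.tail hab

lemma IsJoined.card_lt_of_isOutClosed [Fintype V] (hr : IsJoined k r) (hW : IsOutClosed r W)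
    (hk : k ≤ #W) : Fintype.card V < #W + k := by
  classical
  by_contra! h
  obtain ⟨a, ha, b, hb, hab⟩ := hr W Wᶜ hk (by rw [card_compl]; omega)
  exact mem_compl.1 hb (hW a ha b hab)

lemma IsJoined.exists_stronglyConnected [Fintype V] (hr : IsJoined k r) :
    ∃ C : Finset V, Fintype.card V < #C + 2 * k ∧
      ∀ x ∈ C, ∀ y ∈ C, Relation.ReflTransGen r x y := by
  classical
  have hk := hr.pos
  rcases lt_or_ge (Fintype.card V) k with hV | hV
  · exact ⟨∅, by rw [card_empty]; omega, by simp⟩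
  -- An out-closed set has fewer than `k` vertices or misses fewer than `k`. Going up a maximal
  -- chain of out-closed sets, the step `U ⊂ W` from the first kind to the second adds `C`.
  obtain ⟨W, ⟨hWclosed, hkW⟩, hWmin⟩ :=
    exists_minimal_of_wellFoundedLT (fun W : Finset V => IsOutClosed r W ∧ k ≤ #W)
      ⟨univ, fun _ _ b _ => mem_univ b, hV⟩
  obtain ⟨U, ⟨hUclosed, hUW⟩, hUmax⟩ :=
    exists_maximal_of_wellFoundedGT (fun U : Finset V => IsOutClosed r U ∧ U ⊂ W)
      ⟨∅, by simp [IsOutClosed], empty_ssubset.2 (card_pos.1 (by omega))⟩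
  have hUk : #U < k := by
    by_contra! h
    exact hUW.2 (hWmin ⟨hUclosed, h⟩ hUW.1)
  refine ⟨W \ U, ?_, fun x hx y hy => ?_⟩
  · have := hr.card_lt_of_isOutClosed hWclosed hkW
    have := card_sdiff_add_card_eq_card hUW.1
    omega
  · rw [Finset.mem_sdiff] at hx hy
    let R : Finset V := {z | Relation.ReflTransGen r x z}
    have hRW : R ⊆ W := fun z hz =>
      hWclosed.mem_of_reflTransGen hx.1 ((mem_filter_univ z).1 hz)
    have hUR : IsOutClosed r (U ∪ R) := hUclosed.union (isOutClosed_filter_reflTransGen r x)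
    have hxR : x ∈ U ∪ R := mem_union_right _ (by simp [R, Relation.ReflTransGen.refl])
    have hWUR : W ⊆ U ∪ R := by
      by_contra h
      exact hx.2 (hUmax ⟨hUR, union_subset hUW.1 hRW, h⟩ subset_union_left hxR)
    simpa [R, hy.2] using hWUR hy.1

lemma exists_nodup_isChain_of_reflTransGen (h : Relation.ReflTransGen r y x) :
    ∃ l : List V, (y :: l).Nodup ∧ (y :: l).IsChain r ∧
      (y :: l).getLast (List.cons_ne_nil y l) = x := by
  induction h using Relation.ReflTransGen.head_induction_on with
  | refl => exact ⟨[], List.nodup_singleton x, .singleton x, rfl⟩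
  | @head y z hyz _ ih =>
    obtain ⟨l, hnodup, hchain, hlast⟩ := ih
    by_cases hy : y ∈ z :: l
    · obtain ⟨l₁, l₂, hl⟩ := List.mem_iff_append.1 hy
      simp only [hl] at hnodup hchain hlast
      exact ⟨l₂, hnodup.of_append_right, hchain.right_of_append, by simpa using hlast⟩
    · exact ⟨z :: l, List.nodup_cons.2 ⟨hy, hnodup⟩, .cons_cons hyz hchain, by simpa using hlast⟩

lemma exists_perm_of_reflTransGen (h : Relation.ReflTransGen r y x) :
    ∃ τ : Equiv.Perm V, τ x = y ∧ ∀ a ≠ x, τ a = a ∨ r a (τ a) := by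
  classical
  obtain ⟨l, hnodup, hchain, rfl⟩ := exists_nodup_isChain_of_reflTransGen h
  refine ⟨(y :: l).formPerm, List.formPerm_apply_getLast y l, fun a ha => ?_⟩
  by_cases hmem : a ∈ y :: l
  · obtain ⟨m, hm, rfl⟩ := List.getElem_of_mem hmem
    have hm' : m + 1 < (y :: l).length := by
      rw [List.getLast_eq_getElem] at ha
      grind
    rw [List.formPerm_apply_lt_getElem _ hnodup m hm']
    exact .inr (List.isChain_iff_getElem.1 hchain m hm')
  · exact .inl (List.formPerm_apply_of_notMem hmem)

lemma IsJoined.exists_perm [Fintype V] (hr : IsJoined k r) (hs : IsJoined k s)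
    (hV : 3 * k ≤ Fintype.card V) :
    ∃ (τ : Equiv.Perm V) (x : V), s x (τ x) ∧ ∀ a ≠ x, τ a = a ∨ r a (τ a) := by
  obtain ⟨C, hC, hconn⟩ := hr.exists_stronglyConnected
  obtain ⟨x, hx, y, hy, hxy⟩ := hs C C (by omega) (by omega)
  obtain ⟨τ, hτx, hτ⟩ := exists_perm_of_reflTransGen (hconn y hy x hx)
  exact ⟨τ, x, hτx ▸ hxy, hτ⟩

end Digraph

section Matching

variable {A B C D : Type*} {k : ℕ} {f : A × B → Option C} {σ : A ≃ B} {i j : C}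

/-- A perfect matching `{(a, σ a)}` of the colored bipartite graph `f`, encoded as a bijection `σ`
between the two parts; `f` takes the value `none` on non-edges. -/
def IsPerfectMatching (f : A × B → Option C) (σ : A ≃ B) : Prop :=
  ∀ a, f (a, σ a) ≠ none

/-- The number of edges of color `c` in the matching `M = {(a, σ a)}`, written `|M ∩ Q_c|`. -/
def colorCount [Fintype A] [DecidableEq C] (f : A × B → Option C) (σ : A ≃ B) (c : C) : ℕ :=
  #{a | f (a, σ a) = some c}

/-- Some perfect matching has one edge of color `i` less and one edge of color `j` more than `σ`,
and as many edges of every other color. -/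
def CanExchange [Fintype A] [DecidableEq C] (f : A × B → Option C) (σ : A ≃ B) (i j : C) : Prop :=
  ∃ σ' : A ≃ B, IsPerfectMatching f σ' ∧ colorCount f σ' i + 1 = colorCount f σ i ∧
    colorCount f σ' j = colorCount f σ j + 1 ∧
    ∀ l, l ≠ i → l ≠ j → colorCount f σ' l = colorCount f σ l

lemma card_filter_update_add [Fintype A] [DecidableEq A] [DecidableEq D] (g : A → D) (x : A)
    (d c : D) :
    #{a | Function.update g x d a = c} + (if g x = c then 1 else 0) =
      #{a | g a = c} + if d = c then 1 else 0 := by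
  have hrest : ∑ a ∈ univ.erase x, (if Function.update g x d a = c then 1 else 0) =
      ∑ a ∈ univ.erase x, if g a = c then 1 else 0 :=
    sum_congr rfl fun a ha => by rw [Function.update_of_ne (ne_of_mem_erase ha)]
  rw [card_filter, card_filter, ← add_sum_erase _ _ (mem_univ x),
    ← add_sum_erase univ (fun a => if g a = c then 1 else 0) (mem_univ x), hrest,
    Function.update_self]
  omega

lemma exists_equiv_colors_eq_update [Fintype A] [DecidableEq A] [DecidableEq C]
    (hi : IsJoined k fun a b => f (a, b) = some i) (hj : IsJoined k fun a b => f (a, b) = some j)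
    (hσ : 3 * k ≤ colorCount f σ i) :
    ∃ (σ' : A ≃ B) (x : A), f (x, σ x) = some i ∧
      (fun a => f (a, σ' a)) = Function.update (fun a => f (a, σ a)) x (some j) := by
  let V := {a // f (a, σ a) = some i}
  let partner : V ↪ B := (Function.Embedding.subtype _).trans σ.toEmbedding
  have hV : 3 * k ≤ Fintype.card V := by rwa [Fintype.card_subtype]
  obtain ⟨τ, x, hx, hτ⟩ := (hi.comap (.subtype _) partner).exists_perm
    (hj.comap (.subtype _) partner) hV
  refine ⟨(Equiv.Perm.ofSubtype τ).trans σ, x, x.2, ?_⟩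
  rw [Function.eq_update_iff]
  have hx' : f (x, σ (Equiv.Perm.ofSubtype τ x)) = some j := by
    rwa [Equiv.Perm.ofSubtype_apply_coe]
  refine ⟨hx', fun a hax => ?_⟩
  by_cases ha : f (a, σ a) = some i
  · rw [Equiv.trans_apply, Equiv.Perm.ofSubtype_apply_of_mem τ ha]
    rcases hτ ⟨a, ha⟩ (fun h => hax (congrArg Subtype.val h)) with hfix | harc
    · rw [hfix]
    · exact harc.trans ha.symm
  · rw [Equiv.trans_apply, Equiv.Perm.ofSubtype_apply_of_not_mem τ ha]

lemma IsPerfectMatching.canExchange [Fintype A] [DecidableEq C] (hσ : IsPerfectMatching f σ)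
    (hij : i ≠ j) (hi : IsJoined k fun a b => f (a, b) = some i)
    (hj : IsJoined k fun a b => f (a, b) = some j) (hk : 3 * k ≤ colorCount f σ i) :
    CanExchange f σ i j := by
  classical
  obtain ⟨σ', x, hx, hσ'⟩ := exists_equiv_colors_eq_update hi hj hk
  have hcount (c : C) : colorCount f σ' c + (if i = c then 1 else 0) =
      colorCount f σ c + if j = c then 1 else 0 := by
    have h := card_filter_update_add (fun a => f (a, σ a)) x (some j) (some c)
    rw [← hσ'] at h
    simpa only [colorCount, hx, Option.some_inj] using h
  refine ⟨σ', fun a => ?_, ?_, ?_, fun l hli hlj => ?_⟩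
  · rw [congrFun hσ' a]
    by_cases hax : a = x
    · simp [hax]
    · simpa [hax] using hσ a
  · simpa [hij.symm] using hcount i
  · simpa [hij] using hcount j
  · simpa [hli.symm, hlj.symm] using hcount l

end Matching

section Measure

lemma measure_pi_forall_mem_finset {ι : Type*} {Ω : ι → Type*} [Fintype ι]
    [∀ i, MeasurableSpace (Ω i)] (μ : ∀ i, Measure (Ω i)) [∀ i, IsProbabilityMeasure (μ i)]
    (T : Finset ι) {s : ∀ i, Set (Ω i)} (hs : ∀ i ∈ T, MeasurableSet (s i)) :
    Measure.pi μ {f | ∀ i ∈ T, f i ∈ s i} = ∏ i ∈ T, μ i (s i) := by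
  rw [← Measure.infinitePi_eq_pi]
  exact Measure.infinitePi_pi μ hs

lemma measure_pi_not_isJoined_le {A B Ω : Type*} [Fintype A] [Fintype B] [MeasurableSpace Ω]
    (μ : Measure Ω) [IsProbabilityMeasure μ] (k : ℕ) {s : Set Ω} (hs : MeasurableSet s) :
    Measure.pi (fun _ : A × B => μ) {f | ¬ IsJoined k fun a b => f (a, b) ∈ s} ≤
      2 ^ (Fintype.card A + Fintype.card B) * μ sᶜ ^ (k * k) := by
  classical
  let P : Finset (Finset A × Finset B) := {t | k ≤ #t.1 ∧ k ≤ #t.2}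
  have hcover : {f : A × B → Ω | ¬ IsJoined k fun a b => f (a, b) ∈ s} ⊆
      ⋃ t ∈ P, {f | ∀ e ∈ t.1 ×ˢ t.2, f e ∈ sᶜ} := by
    intro f hf
    simp only [IsJoined, Set.mem_ofPred_eq] at hf
    push Not at hf
    obtain ⟨X, Y, hX, hY, h⟩ := hf
    refine Set.mem_biUnion (x := (X, Y)) (by simp [P, hX, hY]) fun e he => ?_
    rw [mem_product] at he
    exact h e.1 he.1 e.2 he.2
  have hhole (t) (ht : t ∈ P) : Measure.pi (fun _ : A × B => μ)
      {f | ∀ e ∈ t.1 ×ˢ t.2, f e ∈ sᶜ} ≤ μ sᶜ ^ (k * k) := by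
    have ht' := (mem_filter_univ t).1 ht
    rw [measure_pi_forall_mem_finset _ _ fun _ _ => hs.compl, prod_const, card_product]
    exact pow_le_pow_right_of_le_one' prob_le_one (Nat.mul_le_mul ht'.1 ht'.2)
  have hcard : #P ≤ 2 ^ (Fintype.card A + Fintype.card B) :=
    (card_le_univ P).trans_eq (by simp [pow_add])
  calc _ ≤ ∑ t ∈ P, Measure.pi (fun _ : A × B => μ) {f | ∀ e ∈ t.1 ×ˢ t.2, f e ∈ sᶜ} :=
        (measure_mono hcover).trans (measure_biUnion_finset_le _ _)
    _ ≤ #P • μ sᶜ ^ (k * k) := sum_le_card_nsmul P _ _ hhole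
    _ ≤ _ := by
      rw [nsmul_eq_mul]
      gcongr
      exact_mod_cast hcard

variable {ι : Type*} {l : Filter ι} {Ω : ι → Type*} [∀ n, MeasurableSpace (Ω n)]
  {μ : ∀ n, Measure (Ω n)} {s t : ∀ n, Set (Ω n)}

lemma tendsto_measure_one_mono (hμ : ∀ᶠ n in l, IsProbabilityMeasure (μ n))
    (hs : Tendsto (fun n => μ n (s n)) l (nhds 1)) (hst : ∀ n, s n ⊆ t n) :
    Tendsto (fun n => μ n (t n)) l (nhds 1) :=
  tendsto_of_tendsto_of_tendsto_of_le_of_le' hs tendsto_const_nhds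
    (.of_forall fun n => measure_mono (hst n)) (hμ.mono fun _ _ => prob_le_one)

lemma tendsto_measure_one_of_tendsto_measure_compl (hμ : ∀ᶠ n in l, IsProbabilityMeasure (μ n))
    (hs : Tendsto (fun n => μ n (s n)ᶜ) l (nhds 0)) :
    Tendsto (fun n => μ n (s n)) l (nhds 1) := by
  have hlim : Tendsto (fun n => 1 - μ n (s n)ᶜ) l (nhds 1) := by
    simpa using ENNReal.Tendsto.sub (tendsto_const_nhds (x := 1)) hs (.inl ENNReal.one_ne_top)
  refine tendsto_of_tendsto_of_tendsto_of_le_of_le' hlim tendsto_const_nhds ?_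
    (hμ.mono fun _ _ => prob_le_one)
  filter_upwards [hμ] with n _
  rw [tsub_le_iff_right, ← measure_univ (μ := μ n), ← Set.union_compl_self (s n)]
  exact measure_union_le _ _

end Measure

section ColoredGraph

variable {q : ℕ} {α : Fin q → ℝ} {p : ℝ}

lemma isProbabilityMeasure_colorM (hα : ∀ i, 0 ≤ α i) (hsum : ∑ i, α i = 1)
    (hp : p ∈ Set.Icc 0 1) : IsProbabilityMeasure (colorM q α p) := by
  constructor
  simp only [colorM, Measure.add_apply, Measure.smul_apply, Measure.finsetSum_apply,
    measure_univ, smul_eq_mul, mul_one]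
  rw [← ENNReal.ofReal_sum_of_nonneg fun i _ => mul_nonneg (hα i) hp.1, ← sum_mul, hsum, one_mul,
    ← ENNReal.ofReal_add (sub_nonneg.2 hp.2) hp.1, sub_add_cancel, ENNReal.ofReal_one]

lemma colorM_singleton_some (α : Fin q → ℝ) (p : ℝ) (c : Fin q) :
    colorM q α p {some c} = ENNReal.ofReal (α c * p) := by
  have hdirac (o : Option (Fin q)) : Measure.dirac o {some c} = if o = some c then 1 else 0 := by
    rw [Measure.dirac_apply' o trivial]
    simp [Set.indicator_apply]
  simp [colorM, hdirac]

lemma colorM_compl_singleton_some_le (hα : ∀ i, 0 ≤ α i) (hsum : ∑ i, α i = 1)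
    (hp : p ∈ Set.Icc 0 1) (c : Fin q) :
    colorM q α p {some c}ᶜ ≤ ENNReal.ofReal (Real.exp (-(α c * p))) := by
  have := isProbabilityMeasure_colorM hα hsum hp
  have hs : MeasurableSet ({some c} : Set (Option (Fin q))) := trivial
  rw [prob_compl_eq_one_sub hs, colorM_singleton_some, ← ENNReal.ofReal_one,
    ← ENNReal.ofReal_sub _ (mul_nonneg (hα c) hp.1)]
  exact ENNReal.ofReal_le_ofReal (Real.one_sub_le_exp_neg _)

lemma graphM_not_isJoined_le (n k : ℕ) (hα : ∀ i, 0 ≤ α i) (hsum : ∑ i, α i = 1)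
    (hp : p ∈ Set.Icc 0 1) (c : Fin q) :
    graphM n q α p {f | ¬ IsJoined k fun a b => f (a, b) = some c} ≤
      ENNReal.ofReal (4 ^ n * Real.exp (-(α c * p * k ^ 2))) := by
  have := isProbabilityMeasure_colorM hα hsum hp
  calc _ ≤ 2 ^ (n + n) * colorM q α p {some c}ᶜ ^ (k * k) := by
        simpa [graphM] using measure_pi_not_isJoined_le (A := Fin n) (B := Fin n) (colorM q α p) k
          (s := {some c}) trivial
    _ ≤ 2 ^ (n + n) * ENNReal.ofReal (Real.exp (-(α c * p))) ^ (k * k) := by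
        gcongr
        exact colorM_compl_singleton_some_le hα hsum hp c
    _ = _ := by
        rw [← ENNReal.ofReal_pow (Real.exp_pos _).le, ← Real.exp_nat_mul,
          ENNReal.ofReal_mul (by positivity), ENNReal.ofReal_pow (by norm_num), ← two_mul, pow_mul]
        congr 3
        · norm_num
        · push_cast
          ring

end ColoredGraph

section Asymptotics

lemma tendsto_pow_mul_exp_neg {b : ℝ} (hb : 0 < b) {x : ℕ → ℝ}
    (hx : Tendsto (fun n => x n / n) atTop atTop) :
    Tendsto (fun n => b ^ n * Real.exp (-x n)) atTop (nhds 0) := by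
  have hexponent : Tendsto (fun n : ℕ => n * (Real.log b - x n / n)) atTop atBot :=
    tendsto_natCast_atTop_atTop.atTop_mul_atBot₀
      (tendsto_atBot_add_const_left _ _ (tendsto_neg_atTop_atBot.comp hx))
  refine (Real.tendsto_exp_atBot.comp hexponent).congr' ?_
  filter_upwards [eventually_ne_atTop 0] with n hn
  have hn' : (n : ℝ) ≠ 0 := by exact_mod_cast hn
  rw [Function.comp_apply, mul_sub, mul_div_cancel₀ _ hn', sub_eq_add_neg, Real.exp_add,
    Real.exp_nat_mul, Real.exp_log hb]

variable {q : ℕ} {α : Fin q → ℝ} {p : ℕ → ℝ} {w : ℕ → ℝ}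

lemma eventually_mem_Icc_of_tendsto_natCast_mul (hp : ∀ᶠ n in atTop, p n ≤ 1)
    (hnp : Tendsto (fun n => n * p n) atTop atTop) : ∀ᶠ n in atTop, p n ∈ Set.Icc 0 1 := by
  filter_upwards [hp, hnp.eventually_gt_atTop 0] with n hp1 hpos
  exact ⟨(pos_of_mul_pos_right hpos n.cast_nonneg).le, hp1⟩

lemma eventually_isProbabilityMeasure_graphM (hα : ∀ i, 0 ≤ α i) (hsum : ∑ i, α i = 1)
    (hp : ∀ᶠ n in atTop, p n ∈ Set.Icc 0 1) :
    ∀ᶠ n in atTop, IsProbabilityMeasure (graphM n q α (p n)) := by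
  filter_upwards [hp] with n hpn
  have := isProbabilityMeasure_colorM hα hsum hpn
  unfold graphM
  infer_instance

lemma tendsto_graphM_not_isJoined (hα : ∀ i, 0 ≤ α i) (hsum : ∑ i, α i = 1) {c : Fin q}
    (hc : 0 < α c) {γ : ℝ} (hγ : 0 < γ) (hp : ∀ᶠ n in atTop, p n ∈ Set.Icc 0 1)
    (hnp : Tendsto (fun n => n * p n) atTop atTop) :
    Tendsto (fun n => graphM n q α (p n)
      {f | ¬ IsJoined ⌊γ * n⌋₊ fun a b => f (a, b) = some c}) atTop (nhds 0) := by
  have hfloor : Tendsto (fun n : ℕ => (⌊γ * n⌋₊ : ℝ) / n) atTop (nhds γ) :=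
    (tendsto_nat_floor_mul_div_atTop hγ.le).comp tendsto_natCast_atTop_atTop
  have hrate : Tendsto (fun n : ℕ => α c * p n * (⌊γ * n⌋₊ : ℝ) ^ 2 / n) atTop atTop := by
    refine ((hnp.const_mul_atTop hc).atTop_mul_pos (pow_pos hγ 2) (hfloor.pow 2)).congr' ?_
    filter_upwards [eventually_ne_atTop 0] with n hn
    field_simp
  have hbound := ENNReal.tendsto_ofReal (tendsto_pow_mul_exp_neg (b := 4) (by norm_num) hrate)
  rw [ENNReal.ofReal_zero] at hbound
  refine tendsto_of_tendsto_of_tendsto_of_le_of_le' tendsto_const_nhds hbound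
    (.of_forall fun _ => zero_le) ?_
  filter_upwards [hp] with n hpn
  exact graphM_not_isJoined_le n _ hα hsum hpn c

lemma tendsto_graphM_forall_isJoined (hα : ∀ i, 0 < α i) (hsum : ∑ i, α i = 1)
    {γ : ℝ} (hγ : 0 < γ) (hp : ∀ᶠ n in atTop, p n ∈ Set.Icc 0 1)
    (hnp : Tendsto (fun n => n * p n) atTop atTop) :
    Tendsto (fun n => graphM n q α (p n)
      {f | ∀ c, IsJoined ⌊γ * n⌋₊ fun a b => f (a, b) = some c}) atTop (nhds 1) := by
  refine tendsto_measure_one_of_tendsto_measure_compl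
    (eventually_isProbabilityMeasure_graphM (fun i => (hα i).le) hsum hp) ?_
  have hsum0 := tendsto_finsetSum univ fun c _ =>
    tendsto_graphM_not_isJoined (fun i => (hα i).le) hsum (hα c) hγ hp hnp
  rw [sum_const_zero] at hsum0
  refine tendsto_of_tendsto_of_tendsto_of_le_of_le tendsto_const_nhds hsum0
    (fun _ => zero_le) fun n => ?_
  refine (measure_mono fun f hf => ?_).trans (measure_iUnion_fintype_le _ _)
  simpa using hf

lemma tendsto_natCast_mul_log_add_div (hw : Tendsto w atTop atTop) :
    Tendsto (fun n : ℕ => n * ((Real.log n + w n) / n)) atTop atTop := by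
  have hlog : Tendsto (fun n : ℕ => Real.log n) atTop atTop :=
    Real.tendsto_log_atTop.comp tendsto_natCast_atTop_atTop
  refine (hlog.atTop_add_atTop hw).congr' ?_
  filter_upwards [eventually_ne_atTop 0] with n hn
  field_simp

lemma eventually_log_add_div_le_one (hw : w =o[atTop] fun n => Real.log n) :
    ∀ᶠ n : ℕ in atTop, (Real.log n + w n) / n ≤ 1 := by
  have hlog : (fun n : ℕ => Real.log n) =o[atTop] fun n : ℕ => (n : ℝ) :=
    Real.isLittleO_log_id_atTop.comp_tendsto tendsto_natCast_atTop_atTop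
  exact (hlog.add (hw.trans hlog)).tendsto_div_nhds_zero.eventually_le_const one_pos

end Asymptotics

theorem color_exchange_general {q : ℕ} {α : Fin q → ℝ} (hα : ∀ i, 0 < α i)
    (hsum : ∑ i, α i = 1) {β : ℝ} (hβ : 0 < β) {p : ℕ → ℝ} (hp : ∀ᶠ n in atTop, p n ≤ 1)
    (hnp : Tendsto (fun n => n * p n) atTop atTop) :
    Tendsto (fun n => graphM n q α (p n)
      {f | ∀ σ : Equiv.Perm (Fin n), IsPerfectMatching f σ → ∀ i j : Fin q, i ≠ j →
        β * n ≤ colorCount f σ i → CanExchange f σ i j}) atTop (nhds 1) := by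
  have hp' := eventually_mem_Icc_of_tendsto_natCast_mul hp hnp
  refine tendsto_measure_one_mono
    (eventually_isProbabilityMeasure_graphM (fun i => (hα i).le) hsum hp')
    (tendsto_graphM_forall_isJoined hα hsum (γ := β / 3) (by positivity) hp' hnp)
    fun n f hf σ hσ i j hij hi => hσ.canExchange hij (hf i) (hf j) ?_
  have hfloor : (⌊β / 3 * n⌋₊ : ℝ) ≤ β / 3 * n := Nat.floor_le (by positivity)
  have : ((3 * ⌊β / 3 * n⌋₊ : ℕ) : ℝ) ≤ colorCount f σ i := by
    push_cast
    linarith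
  exact_mod_cast this

/-- w.h.p., for every perfect matching `M` and distinct colors `i, j` with
`|M ∩ Qᵢ| > βn` and `|M ∩ Q_j| ≥ βn`, there is a perfect matching `M'` with one fewer
edge of color `i`, one more of color `j`, and the same number of every other color. -/
theorem color_exchange (q : ℕ) (hq : 2 ≤ q) (α : Fin q → ℝ)
    (hα : ∀ i, 0 < α i) (hsum : ∑ i, α i = 1)
    (β : ℝ) (hβ : 0 < β) (hβq : β < 1 / q)
    (w : ℕ → ℝ) (hw : Tendsto w atTop atTop)
    (hwo : w =o[atTop] fun n => Real.log n) :
    Tendsto (fun n =>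
      graphM n q α ((Real.log n + w n) / n)
        {f | ∀ σ : Equiv.Perm (Fin n), (∀ a, f (a, σ a) ≠ none) →
          ∀ i j : Fin q, i ≠ j →
            β * n < ((univ.filter fun a => f (a, σ a) = some i).card : ℝ) →
            β * n ≤ ((univ.filter fun a => f (a, σ a) = some j).card : ℝ) →
            ∃ σ' : Equiv.Perm (Fin n), (∀ a, f (a, σ' a) ≠ none) ∧
              (univ.filter fun a => f (a, σ' a) = some i).card + 1 =
                (univ.filter fun a => f (a, σ a) = some i).card ∧
              (univ.filter fun a => f (a, σ' a) = some j).card =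
                (univ.filter fun a => f (a, σ a) = some j).card + 1 ∧
              ∀ l : Fin q, l ≠ i → l ≠ j →
                (univ.filter fun a => f (a, σ' a) = some l).card =
                  (univ.filter fun a => f (a, σ a) = some l).card})
      atTop (nhds 1) := by
  have hp := eventually_log_add_div_le_one hwo
  have hnp := tendsto_natCast_mul_log_add_div hw
  have hprob := eventually_isProbabilityMeasure_graphM (fun i => (hα i).le) hsum
    (eventually_mem_Icc_of_tendsto_natCast_mul hp hnp)
  exact tendsto_measure_one_mono hprob (color_exchange_general hα hsum hβ hp hnp)
    fun _ _ hf σ hσ i j hij hi _ => hf σ hσ i j hij hi.le
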